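/- Let I ⊆ ℝ be a compact nontrivial interval, x₀ ∈ I with x₀ < sup I, and let f₀ : I → ℝ be continuous with f₀(x₀) = 0 and f₀(x) ≠ 0 for x ≠ x₀. Let ℱ be a set of continuous functions I → ℝ that is closed under convex combinations and order-convex (if r₁, r₂ ∈ ℱ and r : I → ℝ is continuous with r₁(x) ≤ r(x) ≤ r₂(x) for all x ∈ I, then r ∈ ℱ), and such that every r ∈ ℱ satisfies r(x) = o(f₀(x)) as x → x₀ from the right. Then the family {A^[f₀+r] : r ∈ ℱ and f₀+r is strictly monotone on I} is an interval-type set: whenever r₁, r₂ ∈ ℱ are such that f₀+r₁ and f₀+r₂ are strictly monotone, h : I → ℝ is continuous and strictly monotone, and A^[f₀+r₁] ≤ A^[h] ≤ A^[f₀+r₂], then there exists r ∈ ℱ such that f₀+r is strictly monotone and A^[h] = A^[f₀+r]. -/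

import Mathlib

/-!
Write `f = f₀ + r₁` and `g = f₀ + r₂`. The little-o condition forces `f x₀ = g x₀ = 0` and
`g / f → 1` at `x₀⁺`, so `f` and `g` are monotone in the same direction; up to a sign (which does
not change the means) both increase, and `h` may be replaced by an increasing affine image with
`h x₀ = 0`. The inequalities `A^[f] ≤ A^[h] ≤ A^[g]` say that `h ∘ f⁻¹` and `g ∘ h⁻¹` are convex
(`qamLE.convex`), and both vanish at `0`. Let `c` be the right derivative of `h ∘ f⁻¹` at `0`.
Since `g / f → 1`, the right derivative of `g ∘ h⁻¹` at `0` is `1 / c`, so `0 < c`, and the tangent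
line inequalities give `c f ≤ h ≤ c g` on all of `I` (`exists_scaled_between`). Hence
`r = h / c - f₀` lies between `r₁` and `r₂`, so it belongs to `𝓕` by order-convexity, and
`f₀ + r = h / c` generates the same mean as `h`.
-/

open Set Function Filter

/-- The quasi-arithmetic mean generated by `f` on the interval `I`,
applied to a vector `a ∈ Iⁿ`: `f⁻¹((f a₁ + ⋯ + f aₙ)/n)`, where the
inverse of `f` is taken on `I`. -/
noncomputable def qam (I : Set ℝ) (f : ℝ → ℝ) {n : ℕ} (a : Fin n → ℝ) : ℝ :=
  Function.invFunOn f I ((∑ i, f (a i)) / n)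

/-- The natural (pointwise) partial order on quasi-arithmetic means:
`A^[f] ≤ A^[g]` iff `A^[f](a) ≤ A^[g](a)` for every `n ≥ 1` and every `a ∈ Iⁿ`. -/
def qamLE (I : Set ℝ) (f g : ℝ → ℝ) : Prop :=
  ∀ n : ℕ, 1 ≤ n → ∀ a : Fin n → ℝ, (∀ i, a i ∈ I) → qam I f a ≤ qam I g a

/-- `A^[f] = A^[g]` : equality of the two quasi-arithmetic means as means. -/
def qamEQ (I : Set ℝ) (f g : ℝ → ℝ) : Prop :=
  ∀ n : ℕ, 1 ≤ n → ∀ a : Fin n → ℝ, (∀ i, a i ∈ I) → qam I f a = qam I g a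

/-- `f` is strictly monotone on `I` (strictly increasing or strictly decreasing). -/
def StrictMonoOrAntiOn (f : ℝ → ℝ) (I : Set ℝ) : Prop :=
  StrictMonoOn f I ∨ StrictAntiOn f I

/-! ### Elementary facts on quasi-arithmetic means -/

lemma qam_spec {I : Set ℝ} (hI : I.OrdConnected) {f : ℝ → ℝ} (hf : ContinuousOn f I)
    {n : ℕ} (hn : 1 ≤ n) {a : Fin n → ℝ} (ha : ∀ i, a i ∈ I) :
    qam I f a ∈ I ∧ f (qam I f a) = (∑ i, f (a i)) / n := by
  have hn0 : (0 : ℝ) < n := by exact_mod_cast hn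
  have himg : (f '' I).OrdConnected :=
    (hI.isPreconnected.image f hf).ordConnected
  have hconv : Convex ℝ (f '' I) := himg.convex
  have hmem : (∑ i, f (a i)) / n ∈ f '' I := by
    have := hconv.sum_mem (t := Finset.univ) (w := fun _ : Fin n => (n : ℝ)⁻¹)
      (z := fun i => f (a i)) (fun i _ => by positivity)
      (by simp [hn0.ne']) (fun i _ => mem_image_of_mem f (ha i))
    simpa [← Finset.mul_sum, div_eq_inv_mul] using this
  exact ⟨invFunOn_mem hmem, invFunOn_eq hmem⟩

lemma StrictMonoOrAntiOn.injOn {f : ℝ → ℝ} {I : Set ℝ} (hf : StrictMonoOrAntiOn f I) :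
    InjOn f I :=
  hf.elim StrictMonoOn.injOn StrictAntiOn.injOn

lemma StrictMonoOrAntiOn.affine {f : ℝ → ℝ} {I : Set ℝ} (hf : StrictMonoOrAntiOn f I)
    {s : ℝ} (hs : s ≠ 0) (b : ℝ) : StrictMonoOrAntiOn (fun x => s * f x + b) I := by
  rcases hf with hf | hf <;> rcases hs.lt_or_gt with h | h
  · exact Or.inr fun x hx y hy hxy => by nlinarith [hf hx hy hxy]
  · exact Or.inl fun x hx y hy hxy => by nlinarith [hf hx hy hxy]
  · exact Or.inl fun x hx y hy hxy => by nlinarith [hf hx hy hxy]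
  · exact Or.inr fun x hx y hy hxy => by nlinarith [hf hx hy hxy]

/-- A quasi-arithmetic mean does not change under an affine change of its generator. -/
lemma qam_affine {I : Set ℝ} (hI : I.OrdConnected) {f : ℝ → ℝ} (hf : ContinuousOn f I)
    (hinj : InjOn f I) {s : ℝ} (hs : s ≠ 0) (b : ℝ)
    {n : ℕ} (hn : 1 ≤ n) {a : Fin n → ℝ} (ha : ∀ i, a i ∈ I) :
    qam I (fun x => s * f x + b) a = qam I f a := by
  have hn0 : (n : ℝ) ≠ 0 := by positivity
  obtain ⟨h1, h2⟩ := qam_spec hI hf hn ha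
  obtain ⟨h3, h4⟩ := qam_spec hI (f := fun x => s * f x + b) (by fun_prop) hn ha
  refine hinj h3 h1 ?_
  rw [h2]
  have h5 : (∑ i, (s * f (a i) + b)) / (n : ℝ) = s * ((∑ i, f (a i)) / n) + b := by
    rw [Finset.sum_add_distrib, ← Finset.mul_sum]
    simp
    field_simp
  simp only [h5] at h4
  exact mul_left_cancel₀ hs (by linarith)

lemma qamLE.affine {I : Set ℝ} (hI : I.OrdConnected) {f g : ℝ → ℝ} (hf : ContinuousOn f I)
    (hfi : InjOn f I) (hg : ContinuousOn g I) (hgi : InjOn g I) (hle : qamLE I f g)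
    {s t : ℝ} (hs : s ≠ 0) (ht : t ≠ 0) (b c : ℝ) :
    qamLE I (fun x => s * f x + b) (fun x => t * g x + c) := by
  intro n hn a ha
  rw [qam_affine hI hf hfi hs b hn ha, qam_affine hI hg hgi ht c hn ha]
  exact hle n hn a ha

/-! ### Comparison of means as relative convexity of the generators -/

/-- Rational weights: apply the comparison of means to `k` copies of `u` and `m` copies of `v`. -/
lemma qamLE.exists_rat {I : Set ℝ} (hI : I.OrdConnected) {f h : ℝ → ℝ}
    (hf : ContinuousOn f I) (hh : ContinuousOn h I) (hhm : StrictMonoOn h I)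
    (hle : qamLE I f h) {u v : ℝ} (hu : u ∈ I) (hv : v ∈ I)
    {q : ℚ} (hq0 : 0 ≤ q) (hq1 : q ≤ 1) :
    ∃ w ∈ I, f w = q * f u + (1 - q) * f v ∧ h w ≤ q * h u + (1 - q) * h v := by
  obtain ⟨k, hk⟩ : ∃ k : ℕ, q.num = k := Int.eq_ofNat_of_zero_le (Rat.num_nonneg.2 hq0)
  have hkd : k ≤ q.den := by
    have h1 := hq1
    rw [← Rat.num_div_den q, hk, div_le_one (by exact_mod_cast q.den_pos)] at h1
    exact_mod_cast h1
  obtain ⟨m, hm⟩ := Nat.exists_eq_add_of_le hkd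
  have hn : 1 ≤ k + m := by rw [← hm]; exact q.den_pos
  have hn0 : (0 : ℝ) < (k : ℝ) + m := by exact_mod_cast hn
  have hq : (q : ℝ) = k / (k + m) := by
    rw [Rat.cast_def, hk, hm]; push_cast; rfl
  have ha : ∀ i, Fin.append (fun _ : Fin k => u) (fun _ : Fin m => v) i ∈ I := by
    intro i
    refine Fin.addCases (fun j => ?_) (fun j => ?_) i <;> simp [hu, hv]
  have key : ∀ φ : ℝ → ℝ,
      (∑ i, φ (Fin.append (fun _ : Fin k => u) (fun _ : Fin m => v) i)) / ((k + m : ℕ) : ℝ)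
        = q * φ u + (1 - q) * φ v := by
    intro φ
    rw [Fin.sum_univ_add, hq]
    simp
    field_simp
    ring
  obtain ⟨h1, h2⟩ := qam_spec hI hf hn ha
  obtain ⟨h3, h4⟩ := qam_spec hI hh hn ha
  refine ⟨_, h1, h2.trans (key f), ?_⟩
  rw [← key h, ← h4]
  exact hhm.monotoneOn h1 h3 (hle _ hn _ ha)

/-- `A^[f] ≤ A^[h]` with increasing generators means that `h ∘ f⁻¹` is convex; this is the
convexity inequality, written without the inverse function. -/
lemma qamLE.convex {I : Set ℝ} (hI : I.OrdConnected) {f h : ℝ → ℝ}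
    (hf : ContinuousOn f I) (hfm : StrictMonoOn f I)
    (hh : ContinuousOn h I) (hhm : StrictMonoOn h I)
    (hle : qamLE I f h) {u v w : ℝ} (hu : u ∈ I) (hv : v ∈ I) (hw : w ∈ I) (huv : u < v)
    {t : ℝ} (ht0 : 0 ≤ t) (ht1 : t ≤ 1) (hfw : f w = t * f u + (1 - t) * f v) :
    h w ≤ t * h u + (1 - t) * h v := by
  have hfuv := hfm hu hv huv
  have hhuv := hhm hu hv huv
  have huw : u ≤ w := (hfm.le_iff_le hu hw).1 (by nlinarith)
  rcases huw.eq_or_lt with rfl | huw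
  · nlinarith
  have hfuw := hfm hu hw huw
  have ht1' : t < 1 := by
    by_contra hcon
    obtain rfl : t = 1 := by linarith
    linarith
  -- A point `w'` slightly left of `w` leaves room to enlarge `t` to a rational weight,
  -- which only decreases the right-hand side.
  have hlt : ∀ w' ∈ Ioo u w, h w' ≤ t * h u + (1 - t) * h v := by
    intro w' hw'
    have hw'I : w' ∈ I := hI.out hu hw ⟨hw'.1.le, hw'.2.le⟩
    have hd := hfm hw'I hw hw'.2
    obtain ⟨q, hq1, hq2⟩ := exists_rat_btwn
      (show t < min 1 (t + (f w - f w') / (f v - f u)) from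
        lt_min ht1' (by have := div_pos (sub_pos.2 hd) (sub_pos.2 hfuv); linarith))
    obtain ⟨hq3, hq4⟩ := lt_min_iff.1 hq2
    have hq5 : ((q : ℝ) - t) * (f v - f u) < f w - f w' := by
      rw [← lt_div_iff₀ (sub_pos.2 hfuv)]; linarith
    obtain ⟨w₂, hw₂, h1, h2⟩ := hle.exists_rat hI hf hh hhm hu hv (q := q)
      (by have : (0 : ℝ) ≤ q := by linarith
          exact_mod_cast this)
      (by exact_mod_cast hq3.le)
    have h3 : w' ≤ w₂ := (hfm.le_iff_le hw'I hw₂).1 (by nlinarith)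
    have h4 := hhm.monotoneOn hw'I hw₂ h3
    nlinarith
  have hIoo : Ioo u w ⊆ I := fun x hx => hI.out hu hw ⟨hx.1.le, hx.2.le⟩
  have hcont : Tendsto h (nhdsWithin w (Ioo u w)) (nhds (h w)) :=
    (hh w hw).mono_left (nhdsWithin_mono _ hIoo)
  have : (nhdsWithin w (Ioo u w)).NeBot := right_nhdsWithin_Ioo_neBot huw
  exact le_of_tendsto hcont (eventually_nhdsWithin_of_forall hlt)

/-- Monotonicity of the slope at `0 = f x₀` of the convex function `h ∘ f⁻¹`: the slope
`h z / f z` at a point `z > x₀` is at least the slopes at points left of `x₀` and at most those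
at points right of `z`. Both cases cross-multiply to the same inequality. -/
lemma qamLE.slope {I : Set ℝ} (hI : I.OrdConnected) {f h : ℝ → ℝ}
    (hf : ContinuousOn f I) (hfm : StrictMonoOn f I)
    (hh : ContinuousOn h I) (hhm : StrictMonoOn h I) (hle : qamLE I f h)
    {x₀ : ℝ} (hx₀ : x₀ ∈ I) (hf0 : f x₀ = 0) (hh0 : h x₀ = 0)
    {x z : ℝ} (hx : x ∈ I) (hz : z ∈ I) (hxz : x₀ < z) (hor : x ≤ x₀ ∨ z ≤ x) :
    h z * f x ≤ h x * f z := by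
  have hfz : 0 < f z := hf0 ▸ hfm hx₀ hz hxz
  rcases hor with hx' | hx'
  · rcases hx'.eq_or_lt with rfl | hx'
    · simp [hf0, hh0]
    have hfx : f x < 0 := hf0 ▸ hfm hx hx₀ hx'
    have hd : 0 < f z - f x := by linarith
    have := hle.convex hI hf hfm hh hhm hx hz hx₀ (hx'.trans hxz)
      (t := f z / (f z - f x)) (by positivity) ((div_le_one hd).2 (by linarith))
      (by rw [hf0]; field_simp; ring)
    rw [hh0] at this
    have h2 : f z / (f z - f x) * h x + (1 - f z / (f z - f x)) * h z
        = (h x * f z - h z * f x) / (f z - f x) := by field_simp; ring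
    rw [h2, le_div_iff₀ hd] at this
    linarith
  · have hx0 : x₀ < x := hxz.trans_le hx'
    have hfx : 0 < f x := hf0 ▸ hfm hx₀ hx hx0
    have hfzx : f z ≤ f x := hfm.monotoneOn hz hx hx'
    have := hle.convex hI hf hfm hh hhm hx₀ hx hz hx0
      (t := 1 - f z / f x) (sub_nonneg.2 ((div_le_one hfx).2 hfzx))
      (by have := div_pos hfz hfx; linarith)
      (by rw [hf0]; field_simp; ring)
    rw [hh0] at this
    have h2 : (1 - f z / f x) * 0 + (1 - (1 - f z / f x)) * h x = h x * f z / f x := by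
      field_simp; ring
    rwa [h2, le_div_iff₀ hfx] at this

lemma neBot_right {I : Set ℝ} (hI : I.OrdConnected) {x₀ : ℝ} (hx₀ : x₀ ∈ I)
    (hsup : ∃ y ∈ I, x₀ < y) : (nhdsWithin x₀ (I ∩ Ioi x₀)).NeBot := by
  obtain ⟨y, hy, hxy⟩ := hsup
  have := left_nhdsWithin_Ioo_neBot hxy
  exact NeBot.mono this (nhdsWithin_mono _ fun x hx => ⟨hI.out hx₀ hy ⟨hx.1.le, hx.2.le⟩, hx.1⟩)

/-- The sandwich. The constant `c` is the right derivative at `0` of the convex function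
`h ∘ f⁻¹`, that is the infimum of `h / f` to the right of `x₀`; tangency of `f` and `g` at `x₀` makes
`1 / c` the right derivative at `0` of `g ∘ h⁻¹`, and both bounds are tangent line
inequalities. -/
lemma exists_scaled_between {I : Set ℝ} (hI : I.OrdConnected) {f g h : ℝ → ℝ}
    (hf : ContinuousOn f I) (hfm : StrictMonoOn f I)
    (hg : ContinuousOn g I) (hgm : StrictMonoOn g I)
    (hh : ContinuousOn h I) (hhm : StrictMonoOn h I)
    (hfh : qamLE I f h) (hhg : qamLE I h g)
    {x₀ : ℝ} (hx₀ : x₀ ∈ I) (hsup : ∃ y ∈ I, x₀ < y)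
    (hf0 : f x₀ = 0) (hg0 : g x₀ = 0) (hh0 : h x₀ = 0)
    (hlim : Tendsto (fun x => g x / f x) (nhdsWithin x₀ (I ∩ Ioi x₀)) (nhds 1)) :
    ∃ c : ℝ, 0 < c ∧ ∀ x ∈ I, c * f x ≤ h x ∧ h x ≤ c * g x := by
  have := neBot_right hI hx₀ hsup
  have fpos : ∀ z ∈ I ∩ Ioi x₀, 0 < f z := fun z hz => hf0 ▸ hfm hx₀ hz.1 hz.2
  have gpos : ∀ z ∈ I ∩ Ioi x₀, 0 < g z := fun z hz => hg0 ▸ hgm hx₀ hz.1 hz.2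
  have hpos : ∀ z ∈ I ∩ Ioi x₀, 0 < h z := fun z hz => hh0 ▸ hhm hx₀ hz.1 hz.2
  set S : Set ℝ := (fun z => h z / f z) '' (I ∩ Ioi x₀) with hS
  obtain ⟨y₀, hy₀I, hy₀⟩ := hsup
  have hy₀' : y₀ ∈ I ∩ Ioi x₀ := ⟨hy₀I, hy₀⟩
  have hSne : S.Nonempty := ⟨_, mem_image_of_mem _ hy₀'⟩
  have hSbdd : BddBelow S :=
    ⟨0, by rintro _ ⟨z, hz, rfl⟩; exact (div_pos (hpos z hz) (fpos z hz)).le⟩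
  have hcle : ∀ z ∈ I ∩ Ioi x₀, sInf S ≤ h z / f z :=
    fun z hz => csInf_le hSbdd (mem_image_of_mem _ hz)
  -- Dividing the slope inequality for `g ∘ h⁻¹` by `f z` and letting `z` decrease to `x₀`.
  have hquot : ∀ x ∈ I, ∀ z ∈ I ∩ Ioi x₀, (x ≤ x₀ ∨ z ≤ x) →
      g z / f z * h x ≤ g x * (h z / f z) := by
    intro x hx z hz hor
    have := hhg.slope hI hh hhm hg hgm hx₀ hh0 hg0 hx hz.1 hz.2 hor
    have hfz := fpos z hz
    rw [div_mul_eq_mul_div, ← mul_div_assoc]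
    gcongr
  have hlim' : ∀ x, Tendsto (fun z => g z / f z * h x)
      (nhdsWithin x₀ (I ∩ Ioi x₀)) (nhds (h x)) := by
    intro x
    simpa using hlim.mul_const (h x)
  have hright : ∀ x ∈ I ∩ Ioi x₀, h x / g x ≤ sInf S := by
    intro x hx
    refine le_csInf hSne ?_
    rintro _ ⟨y, hy, rfl⟩
    rw [div_le_iff₀ (gpos x hx), mul_comm]
    refine le_of_tendsto (hlim' x) ?_
    have hnhds : Iio (min x y) ∈ nhds x₀ := Iio_mem_nhds (lt_min hx.2 hy.2)
    filter_upwards [self_mem_nhdsWithin, mem_nhdsWithin_of_mem_nhds hnhds] with z hz hz'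
    obtain ⟨hzx, hzy⟩ := lt_min_iff.1 (mem_Iio.1 hz')
    refine (hquot x hx.1 z hz (Or.inr hzx.le)).trans ?_
    have h1 := hfh.slope hI hf hfm hh hhm hx₀ hf0 hh0 hy.1 hz.1 hz.2 (Or.inr hzy.le)
    have h2 : h z / f z ≤ h y / f y := (div_le_div_iff₀ (fpos z hz) (fpos y hy)).2 h1
    exact mul_le_mul_of_nonneg_left h2 (gpos x hx).le
  refine ⟨sInf S, (div_pos (hpos _ hy₀') (gpos _ hy₀')).trans_le (hright _ hy₀'), ?_⟩
  intro x hx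
  rcases lt_trichotomy x x₀ with hlt | rfl | hgt
  · have hfx : f x < 0 := hf0 ▸ hfm hx hx₀ hlt
    have hgx : g x < 0 := hg0 ▸ hgm hx hx₀ hlt
    constructor
    · rw [← div_le_iff_of_neg hfx]
      refine le_csInf hSne ?_
      rintro _ ⟨z, hz, rfl⟩
      have := hfh.slope hI hf hfm hh hhm hx₀ hf0 hh0 hx hz.1 hz.2 (Or.inl hlt.le)
      have hfz := fpos z hz
      show h x / f x ≤ h z / f z
      rw [div_le_iff_of_neg hfx, div_mul_eq_mul_div, div_le_iff₀ hfz]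
      exact this
    · refine le_of_tendsto (hlim' x) ?_
      filter_upwards [self_mem_nhdsWithin] with z hz
      refine (hquot x hx z hz (Or.inl hlt.le)).trans ?_
      rw [mul_comm]
      exact mul_le_mul_of_nonpos_right (hcle z hz) hgx.le
  · simp [hf0, hg0, hh0]
  · have hx' : x ∈ I ∩ Ioi x₀ := ⟨hx, hgt⟩
    exact ⟨(le_div_iff₀ (fpos x hx')).1 (hcle x hx'),
      (div_le_iff₀ (gpos x hx')).1 (hright x hx')⟩

/-- A continuous error term `r = o(f₀)` at `x₀⁺` vanishes at `x₀`, as the limit of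
`(r / f₀) * f₀`. -/
lemma error_eq_zero {I : Set ℝ} (hI : I.OrdConnected) {x₀ : ℝ} (hx₀ : x₀ ∈ I)
    (hsup : ∃ y ∈ I, x₀ < y) {f₀ r : ℝ → ℝ} (hf₀ : ContinuousOn f₀ I)
    (hf₀ne : ∀ x ∈ I, x ≠ x₀ → f₀ x ≠ 0) (hr : ContinuousOn r I)
    (ho : Tendsto (fun x => r x / f₀ x) (nhdsWithin x₀ (I ∩ Ioi x₀)) (nhds 0)) :
    r x₀ = 0 := by
  have := neBot_right hI hx₀ hsup
  have h1 : Tendsto r (nhdsWithin x₀ (I ∩ Ioi x₀)) (nhds (r x₀)) :=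
    (hr x₀ hx₀).mono_left (nhdsWithin_mono _ inter_subset_left)
  have h2 : Tendsto f₀ (nhdsWithin x₀ (I ∩ Ioi x₀)) (nhds (f₀ x₀)) :=
    (hf₀ x₀ hx₀).mono_left (nhdsWithin_mono _ inter_subset_left)
  have h3 := ho.mul h2
  rw [zero_mul] at h3
  refine tendsto_nhds_unique (h1.congr' ?_) h3
  filter_upwards [self_mem_nhdsWithin] with x hx
  exact (div_mul_cancel₀ _ (hf₀ne x hx.1 (ne_of_gt hx.2))).symm

/-! ### The interval-type property -/

/-- Theorem 1: Let `I` be a compact nontrivial interval, `x₀ ∈ I` with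
`x₀ < sup I`, `f₀` continuous with `f₀(x₀) = 0` and `f₀ ≠ 0` off `x₀`. Let `𝓕` be a
set of continuous functions on `I`, closed under convex combinations and order-convex,
with every member `o(f₀)` as `x → x₀⁺`. Then the family
`{A^[f₀+r] : r ∈ 𝓕, f₀+r strictly monotone}` is an interval-type set. -/
theorem qam_interval_type_of_error_family
    (I : Set ℝ) (hI : I.OrdConnected) (hIc : IsCompact I)
    (hInontriv : ∃ x ∈ I, ∃ y ∈ I, x < y)
    (x₀ : ℝ) (hx₀ : x₀ ∈ I) (hx₀sup : ∃ y ∈ I, x₀ < y)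
    (f₀ : ℝ → ℝ) (hf₀c : ContinuousOn f₀ I) (hf₀x₀ : f₀ x₀ = 0)
    (hf₀ne : ∀ x ∈ I, x ≠ x₀ → f₀ x ≠ 0)
    (𝓕 : Set (ℝ → ℝ))
    (h𝓕cont : ∀ r ∈ 𝓕, ContinuousOn r I)
    (h𝓕convex : ∀ r₁ ∈ 𝓕, ∀ r₂ ∈ 𝓕, ∀ t ∈ Icc (0:ℝ) 1,
      (fun x => t * r₁ x + (1 - t) * r₂ x) ∈ 𝓕)
    (h𝓕ord : ∀ r₁ ∈ 𝓕, ∀ r₂ ∈ 𝓕, ∀ r : ℝ → ℝ, ContinuousOn r I →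
      (∀ x ∈ I, r₁ x ≤ r x ∧ r x ≤ r₂ x) → r ∈ 𝓕)
    (h𝓕o : ∀ r ∈ 𝓕,
      Filter.Tendsto (fun x => r x / f₀ x) (nhdsWithin x₀ (I ∩ Ioi x₀)) (nhds 0))
    (r₁ : ℝ → ℝ) (hr₁ : r₁ ∈ 𝓕) (hm₁ : StrictMonoOrAntiOn (fun x => f₀ x + r₁ x) I)
    (r₂ : ℝ → ℝ) (hr₂ : r₂ ∈ 𝓕) (hm₂ : StrictMonoOrAntiOn (fun x => f₀ x + r₂ x) I)
    (h : ℝ → ℝ) (hhc : ContinuousOn h I) (hhm : StrictMonoOrAntiOn h I)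
    (hle₁ : qamLE I (fun x => f₀ x + r₁ x) h)
    (hle₂ : qamLE I h (fun x => f₀ x + r₂ x)) :
    ∃ r ∈ 𝓕, StrictMonoOrAntiOn (fun x => f₀ x + r x) I ∧
      qamEQ I h (fun x => f₀ x + r x) := by
  have hneBot := neBot_right hI hx₀ hx₀sup
  have hc₁ := h𝓕cont r₁ hr₁
  have hc₂ := h𝓕cont r₂ hr₂
  have h₁0 : f₀ x₀ + r₁ x₀ = 0 := by
    rw [hf₀x₀, error_eq_zero hI hx₀ hx₀sup hf₀c hf₀ne hc₁ (h𝓕o r₁ hr₁), add_zero]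
  have h₂0 : f₀ x₀ + r₂ x₀ = 0 := by
    rw [hf₀x₀, error_eq_zero hI hx₀ hx₀sup hf₀c hf₀ne hc₂ (h𝓕o r₂ hr₂), add_zero]
  have hlim : Tendsto (fun x => (f₀ x + r₂ x) / (f₀ x + r₁ x))
      (nhdsWithin x₀ (I ∩ Ioi x₀)) (nhds 1) := by
    have := ((h𝓕o r₂ hr₂).const_add 1).div ((h𝓕o r₁ hr₁).const_add 1) (by norm_num)
    rw [add_zero, div_one] at this
    refine this.congr' ?_
    filter_upwards [self_mem_nhdsWithin] with x hx
    have hne := hf₀ne x hx.1 (ne_of_gt hx.2)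
    have e : ∀ r : ℝ → ℝ, 1 + r x / f₀ x = (f₀ x + r x) / f₀ x := by
      intro r; field_simp
    simp only [Pi.div_apply, e]
    exact div_div_div_cancel_right₀ hne _ _
  -- Both generators are monotone in the same direction, since their quotient is eventually positive.
  obtain ⟨σ, hσ, hσ₁, hσ₂⟩ : ∃ σ : ℝ, (σ = 1 ∨ σ = -1) ∧
      StrictMonoOn (fun x => σ * (f₀ x + r₁ x) + 0) I ∧
      StrictMonoOn (fun x => σ * (f₀ x + r₂ x) + 0) I := by
    obtain ⟨z, hzpos, hz⟩ :=
      ((hlim.eventually (lt_mem_nhds one_pos)).and self_mem_nhdsWithin).exists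
    rcases hm₁ with hm₁ | hm₁ <;> rcases hm₂ with hm₂ | hm₂
    · exact ⟨1, Or.inl rfl, by simpa using hm₁, by simpa using hm₂⟩
    · have h1 := hm₁ hx₀ hz.1 hz.2
      have h2 := hm₂ hx₀ hz.1 hz.2
      simp only [h₁0, h₂0] at h1 h2
      exact absurd hzpos (div_neg_of_neg_of_pos h2 h1).not_gt
    · have h1 := hm₁ hx₀ hz.1 hz.2
      have h2 := hm₂ hx₀ hz.1 hz.2
      simp only [h₁0, h₂0] at h1 h2
      exact absurd hzpos (div_neg_of_pos_of_neg h2 h1).not_gt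
    · refine ⟨-1, Or.inr rfl, fun x hx y hy hxy => ?_, fun x hx y hy hxy => ?_⟩
      · have := hm₁ hx hy hxy
        simp only at this ⊢
        linarith
      · have := hm₂ hx hy hxy
        simp only at this ⊢
        linarith
  obtain ⟨τ, hτ, hτh⟩ : ∃ τ : ℝ, τ ≠ 0 ∧ StrictMonoOn (fun x => τ * h x + -(τ * h x₀)) I := by
    rcases hhm with hhm | hhm
    · exact ⟨1, one_ne_zero, fun x hx y hy hxy => by simpa using hhm hx hy hxy⟩
    · exact ⟨-1, by norm_num, fun x hx y hy hxy => by
        have := hhm hx hy hxy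
        simp only
        linarith⟩
  have hσ0 : σ ≠ 0 := by rcases hσ with rfl | rfl <;> norm_num
  have hcf₁ : ContinuousOn (fun x => f₀ x + r₁ x) I := hf₀c.add hc₁
  have hcf₂ : ContinuousOn (fun x => f₀ x + r₂ x) I := hf₀c.add hc₂
  obtain ⟨c, hc, hbd⟩ := exists_scaled_between hI
    (f := fun x => σ * (f₀ x + r₁ x) + 0) (g := fun x => σ * (f₀ x + r₂ x) + 0)
    (h := fun x => τ * h x + -(τ * h x₀))
    (by fun_prop) hσ₁ (by fun_prop) hσ₂ (by fun_prop) hτh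
    (hle₁.affine hI hcf₁ hm₁.injOn hhc hhm.injOn hσ0 hτ 0 _)
    (hle₂.affine hI hhc hhm.injOn hcf₂ hm₂.injOn hτ hσ0 _ 0)
    hx₀ hx₀sup (by simp [h₁0]) (by simp [h₂0]) (by simp)
    (hlim.congr fun x => by simp only [add_zero]; rw [mul_div_mul_left _ _ hσ0])
  -- The generator `f₀ + r` is the normalized `h`, rescaled by `1 / c` and given the sign `σ`.
  have hs : σ * τ / c ≠ 0 := div_ne_zero (mul_ne_zero hσ0 hτ) hc.ne'
  obtain ⟨b, hb⟩ : ∃ b, b = -(σ * τ / c * h x₀) := ⟨_, rfl⟩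
  have hgen : (fun x => f₀ x + (σ * τ / c * h x + b - f₀ x))
      = fun x => σ * τ / c * h x + b := by
    funext x; ring
  refine ⟨fun x => σ * τ / c * h x + b - f₀ x, ?_, ?_, ?_⟩
  · have hcr : ContinuousOn (fun x => σ * τ / c * h x + b - f₀ x) I := by fun_prop
    have hval : ∀ x, σ * τ / c * h x + b = σ * ((τ * h x + -(τ * h x₀)) / c) := by
      intro x; rw [hb]; ring
    have hbd' : ∀ x ∈ I, σ * (f₀ x + r₁ x) ≤ (τ * h x + -(τ * h x₀)) / c ∧
        (τ * h x + -(τ * h x₀)) / c ≤ σ * (f₀ x + r₂ x) := by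
      intro x hx
      obtain ⟨h1, h2⟩ := hbd x hx
      rw [le_div_iff₀ hc, div_le_iff₀ hc]
      constructor <;> linarith
    -- For decreasing generators the sign change swaps the two bounds.
    rcases hσ with rfl | rfl
    · refine h𝓕ord r₁ hr₁ r₂ hr₂ _ hcr fun x hx => ?_
      obtain ⟨h1, h2⟩ := hbd' x hx
      have := hval x
      constructor <;> linarith
    · refine h𝓕ord r₂ hr₂ r₁ hr₁ _ hcr fun x hx => ?_
      obtain ⟨h1, h2⟩ := hbd' x hx
      have := hval x
      constructor <;> linarith
  · rw [hgen]
    exact hhm.affine hs b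
  · rw [hgen]
    intro n hn a ha
    exact (qam_affine hI hhc hhm.injOn hs b hn ha).symm
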